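/- Let A(n) be the directed graph whose vertices are the hyperbinary expansions of n and whose arcs are single rewriting steps 02 → 10 or 12 → 20 (leading 2 treated as 02). Then A(n) (viewed as an undirected graph) is a tree, i.e., the number of arcs equals b(n) − 1, if and only if n = 2^(s+t+1) + 2^s − 1 or n = 2^(s+t+1) − 2^s − 1 (> 0) for some nonnegative integers s, t. -/

import Mathlib

/-- The integer represented by a word of digits (most significant first). -/
def hval (w : List ℕ) : ℕ := w.foldl (fun a d => 2 * a + d) 0

/-- `w` is a hyperbinary expansion of `n`: digits in {0,1,2}, nonzero leading
digit, representing `n`.  (The empty word is the unique expansion of `0`.) -/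
def IsHyp (n : ℕ) (w : List ℕ) : Prop :=
  (∀ d ∈ w, d ≤ 2) ∧ w.head? ≠ some 0 ∧ hval w = n

/-- `b n`: the number of hyperbinary expansions of `n` (so `b 0 = 1`). -/
noncomputable def hb (n : ℕ) : ℕ := Set.ncard {w : List ℕ | IsHyp n w}

/-- A single rewriting step: `02 → 10` or `12 → 20`, a leading `2` treated as `02`. -/
def Step (u v : List ℕ) : Prop :=
  (∃ x y : List ℕ, u = x ++ [0, 2] ++ y ∧ v = x ++ [1, 0] ++ y) ∨
  (∃ x y : List ℕ, u = x ++ [1, 2] ++ y ∧ v = x ++ [2, 0] ++ y) ∨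
  (∃ y : List ℕ, u = 2 :: y ∧ v = 1 :: 0 :: y)

/-- Strict shortlex order: first by length, then lexicographically. -/
def Shortlex (u v : List ℕ) : Prop :=
  u.length < v.length ∨ (u.length = v.length ∧ List.Lex (· < ·) u v)

/-- Number of maximal blocks of consecutive `2`'s in a word. -/
def blocks2 : List ℕ → ℕ
  | [] => 0
  | d :: rest => blocks2 rest + (if d = 2 ∧ rest.head? ≠ some 2 then 1 else 0)

/-- The set of hyperbinary expansions. -/
def HS (n : ℕ) : Set (List ℕ) := {w | IsHyp n w}

/-- The set of arcs. -/
def AS (n : ℕ) : Set (List ℕ × List ℕ) :=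
  {p | IsHyp n p.1 ∧ IsHyp n p.2 ∧ Step p.1 p.2}

/-- Increment of the last digit. -/
def SL (u v : List ℕ) : Prop :=
  (∃ x, u = x ++ [0] ∧ v = x ++ [1]) ∨ (∃ x, u = x ++ [1] ∧ v = x ++ [2]) ∨ (u = [] ∧ v = [1])

/-- Arcs at the last position. -/
def TS (m : ℕ) : Set (List ℕ × List ℕ) :=
  {p | IsHyp m p.1 ∧ IsHyp (m+1) p.2 ∧ SL p.1 p.2}

/-- Append a digit. -/
def ap (d : ℕ) (w : List ℕ) : List ℕ := w ++ [d]

lemma ap_inj (d : ℕ) : Function.Injective (ap d) := by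
  intro u v h
  simpa [ap] using h

lemma hval_snoc (w : List ℕ) (d : ℕ) : hval (w ++ [d]) = 2 * hval w + d := by
  simp [hval]

lemma isHyp_nil (n : ℕ) : IsHyp n [] ↔ n = 0 := by
  simp [IsHyp, hval, eq_comm]

lemma isHyp_snoc (n : ℕ) (w : List ℕ) (d : ℕ) :
    IsHyp n (w ++ [d]) ↔ d ≤ 2 ∧ (w = [] → d ≠ 0) ∧ ∃ m, IsHyp m w ∧ n = 2 * m + d := by
  unfold IsHyp
  rw [hval_snoc]
  cases w with
  | nil => simp [hval, eq_comm]
  | cons a l =>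
    simp [or_imp, forall_and]
    grind

lemma isHyp_zero (w : List ℕ) : IsHyp 0 w ↔ w = [] := by
  induction w using List.reverseRecOn with
  | nil => simp [isHyp_nil]
  | append_singleton w d ih =>
    rw [isHyp_snoc]
    simp
    intro _ h m hm h0
    obtain rfl : m = 0 := by omega
    rw [ih] at hm
    have := h hm
    omega

lemma pos_ne_nil {n : ℕ} {w : List ℕ} (h : IsHyp (n+1) w) : w ≠ [] := by
  rintro rfl
  rw [isHyp_nil] at h
  omega

lemma HS_zero : HS 0 = {[]} := by
  ext w; simp [HS, isHyp_zero]

lemma HS_odd (m : ℕ) : HS (2*m+1) = Set.image (ap 1) (HS m) := by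
  ext w
  simp only [HS, Set.mem_ofPred_eq, Set.mem_image, ap]
  constructor
  · intro h
    induction w using List.reverseRecOn with
    | nil => rw [isHyp_nil] at h; omega
    | append_singleton w d _ =>
      rw [isHyp_snoc] at h
      obtain ⟨h1, h2, k, hk, h3⟩ := h
      obtain rfl : d = 1 := by omega
      obtain rfl : m = k := by omega
      exact ⟨w, hk, rfl⟩
  · rintro ⟨x, hx, rfl⟩
    rw [isHyp_snoc]
    exact ⟨by omega, by simp, m, hx, rfl⟩

lemma HS_even (m : ℕ) : HS (2*m+2) = Set.image (ap 2) (HS m) ∪ Set.image (ap 0) (HS (m+1)) := by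
  ext w
  simp only [HS, Set.mem_ofPred_eq, Set.mem_image, ap, Set.mem_union]
  constructor
  · intro h
    induction w using List.reverseRecOn with
    | nil => rw [isHyp_nil] at h; omega
    | append_singleton w d _ =>
      rw [isHyp_snoc] at h
      obtain ⟨h1, h2, k, hk, h3⟩ := h
      have : d = 2 ∨ d = 0 := by omega
      rcases this with rfl | rfl
      · obtain rfl : m = k := by omega
        exact Or.inl ⟨w, hk, rfl⟩
      · obtain rfl : k = m + 1 := by omega
        exact Or.inr ⟨w, hk, rfl⟩
  · rintro (⟨x, hx, rfl⟩ | ⟨x, hx, rfl⟩)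
    · rw [isHyp_snoc]
      exact ⟨by omega, by simp, m, hx, rfl⟩
    · rw [isHyp_snoc]
      exact ⟨by omega, fun h => absurd h (pos_ne_nil hx), m+1, hx, by ring⟩

lemma nat_cases (P : ℕ → Prop) (h0 : P 0) (h1 : ∀ m, (∀ k ≤ m, P k) → P (2*m+1))
    (h2 : ∀ m, (∀ k ≤ m + 1, P k) → P (2*m+2)) (n : ℕ) : P n := by
  induction n using Nat.strong_induction_on with
  | _ n ih =>
    rcases Nat.even_or_odd' n with ⟨k, rfl | rfl⟩
    · rcases k with _ | k
      · exact h0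
      · exact h2 k fun j hj => ih j (by omega)
    · exact h1 k fun j hj => ih j (by omega)

lemma HS_fin (n : ℕ) : (HS n).Finite := by
  induction n using nat_cases with
  | h0 => rw [HS_zero]; simp
  | h1 m ih => rw [HS_odd]; exact (ih m le_rfl).image _
  | h2 m ih => rw [HS_even]; exact ((ih m (by omega)).image _).union ((ih _ le_rfl).image _)

lemma hb_zero : hb 0 = 1 := by
  change (HS 0).ncard = 1
  rw [HS_zero]; simp

lemma hb_odd (m : ℕ) : hb (2*m+1) = hb m := by
  change (HS _).ncard = (HS _).ncard
  rw [HS_odd, Set.ncard_image_of_injective _ (ap_inj 1)]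

lemma hb_even (m : ℕ) : hb (2*m+2) = hb m + hb (m+1) := by
  change (HS _).ncard = (HS _).ncard + (HS _).ncard
  rw [HS_even, Set.ncard_union_eq _ ((HS_fin _).image _) ((HS_fin _).image _),
    Set.ncard_image_of_injective _ (ap_inj _), Set.ncard_image_of_injective _ (ap_inj _)]
  rw [Set.disjoint_left]
  rintro _ ⟨x, _, rfl⟩ ⟨y, _, h⟩
  simp [ap] at h

/-- Append digits to both components. -/
def ap2 (a b : ℕ) (p : List ℕ × List ℕ) : List ℕ × List ℕ := (ap a p.1, ap b p.2)

lemma ap2_inj (a b : ℕ) : Function.Injective (ap2 a b) := by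
  rintro ⟨u, v⟩ ⟨u', v'⟩ h
  simpa [ap2, ap] using h

lemma step_nil_left (v : List ℕ) : ¬ Step [] v := by
  simp [Step]

lemma step_snoc (u v : List ℕ) (a b : ℕ) :
    Step (u ++ [a]) (v ++ [b]) ↔ (a = b ∧ Step u v) ∨ (a = 2 ∧ b = 0 ∧ SL u v) := by
  constructor
  · rintro (⟨x, y, h1, h2⟩ | ⟨x, y, h1, h2⟩ | ⟨y, h1, h2⟩)
    · induction y using List.reverseRecOn with
      | nil =>
        have e1 : u ++ [a] = (x ++ [0]) ++ [2] := by simpa using h1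
        have e2 : v ++ [b] = (x ++ [1]) ++ [0] := by simpa using h2
        obtain ⟨rfl, e⟩ := List.append_inj' e1 rfl
        obtain ⟨rfl, e'⟩ := List.append_inj' e2 rfl
        simp at e e'
        exact Or.inr ⟨e, e', Or.inl ⟨x, rfl, rfl⟩⟩
      | append_singleton y d _ =>
        rw [← List.append_assoc] at h1 h2
        obtain ⟨rfl, e⟩ := List.append_inj' h1 rfl
        obtain ⟨rfl, e'⟩ := List.append_inj' h2 rfl
        simp at e e'
        exact Or.inl ⟨by omega, Or.inl ⟨x, y, rfl, rfl⟩⟩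
    · induction y using List.reverseRecOn with
      | nil =>
        have e1 : u ++ [a] = (x ++ [1]) ++ [2] := by simpa using h1
        have e2 : v ++ [b] = (x ++ [2]) ++ [0] := by simpa using h2
        obtain ⟨rfl, e⟩ := List.append_inj' e1 rfl
        obtain ⟨rfl, e'⟩ := List.append_inj' e2 rfl
        simp at e e'
        exact Or.inr ⟨e, e', Or.inr (Or.inl ⟨x, rfl, rfl⟩)⟩
      | append_singleton y d _ =>
        rw [← List.append_assoc] at h1 h2
        obtain ⟨rfl, e⟩ := List.append_inj' h1 rfl
        obtain ⟨rfl, e'⟩ := List.append_inj' h2 rfl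
        simp at e e'
        exact Or.inl ⟨by omega, Or.inr (Or.inl ⟨x, y, rfl, rfl⟩)⟩
    · induction y using List.reverseRecOn with
      | nil =>
        have e1 : u ++ [a] = [] ++ [2] := by simpa using h1
        have e2 : v ++ [b] = [1] ++ [0] := by simpa using h2
        obtain ⟨rfl, e⟩ := List.append_inj' e1 rfl
        obtain ⟨rfl, e'⟩ := List.append_inj' e2 rfl
        simp at e e'
        exact Or.inr ⟨e, e', Or.inr (Or.inr ⟨rfl, rfl⟩)⟩
      | append_singleton y d _ =>
        have e1 : u ++ [a] = (2 :: y) ++ [d] := by simpa using h1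
        have e2 : v ++ [b] = (1 :: 0 :: y) ++ [d] := by simpa using h2
        obtain ⟨rfl, e⟩ := List.append_inj' e1 rfl
        obtain ⟨rfl, e'⟩ := List.append_inj' e2 rfl
        simp at e e'
        exact Or.inl ⟨by omega, Or.inr (Or.inr ⟨y, rfl, rfl⟩)⟩
  · rintro (⟨rfl, h⟩ | ⟨rfl, rfl, h⟩)
    · rcases h with ⟨x, y, rfl, rfl⟩ | ⟨x, y, rfl, rfl⟩ | ⟨y, rfl, rfl⟩
      · exact Or.inl ⟨x, y ++ [a], by simp, by simp⟩
      · exact Or.inr (Or.inl ⟨x, y ++ [a], by simp, by simp⟩)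
      · exact Or.inr (Or.inr ⟨y ++ [a], by simp, by simp⟩)
    · rcases h with ⟨x, rfl, rfl⟩ | ⟨x, rfl, rfl⟩ | ⟨rfl, rfl⟩
      · exact Or.inl ⟨x, [], by simp, by simp⟩
      · exact Or.inr (Or.inl ⟨x, [], by simp, by simp⟩)
      · exact Or.inr (Or.inr ⟨[], by simp, by simp⟩)

lemma AS_fin (n : ℕ) : (AS n).Finite :=
  ((HS_fin n).prod (HS_fin n)).subset fun _ h => ⟨h.1, h.2.1⟩

lemma TS_fin (n : ℕ) : (TS n).Finite :=
  ((HS_fin n).prod (HS_fin (n+1))).subset fun _ h => ⟨h.1, h.2.1⟩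

lemma AS_zero : AS 0 = ∅ := by
  ext ⟨u, v⟩
  simp only [AS, Set.mem_ofPred_eq, isHyp_zero, Set.mem_empty_iff_false, iff_false]
  rintro ⟨rfl, _, h⟩
  exact step_nil_left _ h

lemma AS_odd (m : ℕ) : AS (2*m+1) = Set.image (ap2 1 1) (AS m) := by
  ext ⟨u, v⟩
  constructor
  · rintro ⟨hu, hv, h⟩
    change u ∈ HS _ at hu
    change v ∈ HS _ at hv
    rw [HS_odd] at hu hv
    obtain ⟨x, hx, rfl⟩ := hu
    obtain ⟨y, hy, rfl⟩ := hv
    refine ⟨(x, y), ⟨hx, hy, ?_⟩, rfl⟩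
    simpa [ap, step_snoc] using h
  · rintro ⟨⟨x, y⟩, ⟨hx, hy, h⟩, he⟩
    simp only [ap2, Prod.mk.injEq] at he
    obtain ⟨rfl, rfl⟩ := he
    refine ⟨?_, ?_, ?_⟩
    · change _ ∈ HS _
      rw [HS_odd]; exact ⟨x, hx, rfl⟩
    · change _ ∈ HS _
      rw [HS_odd]; exact ⟨y, hy, rfl⟩
    · simpa [ap, step_snoc] using h

lemma AS_even (m : ℕ) :
    AS (2*m+2) = (Set.image (ap2 2 2) (AS m) ∪ Set.image (ap2 0 0) (AS (m+1))) ∪ Set.image (ap2 2 0) (TS m) := by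
  ext ⟨u, v⟩
  constructor
  · rintro ⟨hu, hv, h⟩
    change u ∈ HS _ at hu
    change v ∈ HS _ at hv
    rw [HS_even] at hu hv
    rcases hu with ⟨x, hx, rfl⟩ | ⟨x, hx, rfl⟩ <;> rcases hv with ⟨y, hy, rfl⟩ | ⟨y, hy, rfl⟩
    · exact Or.inl (Or.inl ⟨(x, y), ⟨hx, hy, by simpa [ap, step_snoc] using h⟩, rfl⟩)
    · exact Or.inr ⟨(x, y), ⟨hx, hy, by simpa [ap, step_snoc] using h⟩, rfl⟩
    · simp [ap, step_snoc] at h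
    · exact Or.inl (Or.inr ⟨(x, y), ⟨hx, hy, by simpa [ap, step_snoc] using h⟩, rfl⟩)
  · have key : ∀ w, w ∈ HS (2*m+2) → IsHyp (2*m+2) w := fun _ h => h
    rintro ((⟨⟨x, y⟩, ⟨hx, hy, h⟩, he⟩ | ⟨⟨x, y⟩, ⟨hx, hy, h⟩, he⟩) | ⟨⟨x, y⟩, ⟨hx, hy, h⟩, he⟩) <;>
    simp only [ap2, Prod.mk.injEq] at he <;>
    obtain ⟨rfl, rfl⟩ := he
    · refine ⟨key _ ?_, key _ ?_, by simpa [ap, step_snoc] using h⟩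
      · rw [HS_even]; exact Or.inl ⟨x, hx, rfl⟩
      · rw [HS_even]; exact Or.inl ⟨y, hy, rfl⟩
    · refine ⟨key _ ?_, key _ ?_, by simpa [ap, step_snoc] using h⟩
      · rw [HS_even]; exact Or.inr ⟨x, hx, rfl⟩
      · rw [HS_even]; exact Or.inr ⟨y, hy, rfl⟩
    · refine ⟨key _ ?_, key _ ?_, by simpa [ap, step_snoc] using h⟩
      · rw [HS_even]; exact Or.inl ⟨x, hx, rfl⟩
      · rw [HS_even]; exact Or.inr ⟨y, hy, rfl⟩

lemma TS_zero : TS 0 = {([], [1])} := by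
  ext ⟨u, v⟩
  simp only [TS, Set.mem_ofPred_eq, isHyp_zero, Set.mem_singleton_iff, Prod.mk.injEq]
  constructor
  · rintro ⟨rfl, _, h⟩
    simpa [SL] using h
  · rintro ⟨rfl, rfl⟩
    simp [SL, IsHyp, hval]

lemma TS_odd (k : ℕ) : TS (2*k+1) = Set.image (fun x => (ap 1 x, ap 2 x)) (HS k) := by
  ext ⟨u, v⟩
  constructor
  · rintro ⟨hu, hv, h⟩
    change u ∈ HS _ at hu
    rw [HS_odd] at hu
    obtain ⟨x, hx, rfl⟩ := hu
    refine ⟨x, hx, ?_⟩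
    simp [SL, ap] at h
    simp [ap, h]
  · rintro ⟨x, hx, he⟩
    simp only [Prod.mk.injEq] at he
    obtain ⟨rfl, rfl⟩ := he
    refine ⟨?_, ?_, Or.inr (Or.inl ⟨x, rfl, rfl⟩)⟩
    · change _ ∈ HS _
      rw [HS_odd]; exact ⟨x, hx, rfl⟩
    · change _ ∈ HS (2*k+2)
      rw [HS_even]; exact Or.inl ⟨x, hx, rfl⟩

lemma TS_even (k : ℕ) : TS (2*k+2) = Set.image (fun x => (ap 0 x, ap 1 x)) (HS (k+1)) := by
  ext ⟨u, v⟩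
  constructor
  · rintro ⟨hu, hv, h⟩
    change u ∈ HS _ at hu
    rw [HS_even] at hu
    rcases hu with ⟨x, hx, rfl⟩ | ⟨x, hx, rfl⟩
    · simp [SL, ap] at h
    refine ⟨x, hx, ?_⟩
    simp [SL, ap] at h
    simp [ap, h]
  · rintro ⟨x, hx, he⟩
    simp only [Prod.mk.injEq] at he
    obtain ⟨rfl, rfl⟩ := he
    refine ⟨?_, ?_, Or.inl ⟨x, rfl, rfl⟩⟩
    · change _ ∈ HS _
      rw [HS_even]; exact Or.inr ⟨x, hx, rfl⟩
    · change _ ∈ HS (2*(k+1)+1)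
      rw [HS_odd]; exact ⟨x, hx, rfl⟩

lemma pair_inj (a b : ℕ) : Function.Injective (fun x => (ap a x, ap b x)) := by
  intro x y h
  exact ap_inj a (Prod.mk.inj h).1

lemma TS_card (m : ℕ) : (TS m).ncard = hb (m / 2) := by
  rcases Nat.even_or_odd' m with ⟨k, rfl | rfl⟩
  · rcases k with _ | k
    · simp [TS_zero, hb_zero]
    · rw [show 2 * (k+1) = 2*k+2 by ring, TS_even, Set.ncard_image_of_injective _ (pair_inj _ _),
        show (2*k+2)/2 = k+1 by omega]
      rfl
  · rw [TS_odd, Set.ncard_image_of_injective _ (pair_inj _ _), show (2*k+1)/2 = k by omega]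
    rfl

/-- The number of arcs. -/
noncomputable def ar (n : ℕ) : ℕ := (AS n).ncard

lemma ar_zero : ar 0 = 0 := by simp [ar, AS_zero]

lemma ar_odd (m : ℕ) : ar (2*m+1) = ar m := by
  rw [ar, AS_odd, Set.ncard_image_of_injective _ (ap2_inj _ _), ar]

lemma ar_even (m : ℕ) : ar (2*m+2) = ar m + ar (m+1) + hb (m/2) := by
  rw [ar, AS_even, Set.ncard_union_eq _ _ ((TS_fin _).image _),
    Set.ncard_union_eq _ ((AS_fin _).image _) ((AS_fin _).image _),
    Set.ncard_image_of_injective _ (ap2_inj _ _), Set.ncard_image_of_injective _ (ap2_inj _ _),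
    Set.ncard_image_of_injective _ (ap2_inj _ _), TS_card, ar, ar]
  · rw [Set.disjoint_left]
    rintro _ ⟨x, _, rfl⟩ ⟨y, _, h⟩
    simp [ap2, ap] at h
  · rw [Set.disjoint_left]
    rintro _ (⟨x, _, rfl⟩ | ⟨x, _, rfl⟩) ⟨y, _, h⟩ <;>
    simp [ap2, ap] at h
  · exact ((AS_fin _).image _).union ((AS_fin _).image _)

lemma hb_pos (n : ℕ) : 1 ≤ hb n := by
  induction n using nat_cases with
  | h0 => rw [hb_zero]
  | h1 m ih => rw [hb_odd]; exact ih m le_rfl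
  | h2 m ih => rw [hb_even]; have := ih m (by omega); omega

lemma hb_one (n : ℕ) : hb n = 1 ↔ ∃ j, n + 1 = 2 ^ j := by
  induction n using nat_cases with
  | h0 => exact ⟨fun _ => ⟨0, rfl⟩, fun _ => hb_zero⟩
  | h1 m ih =>
    rw [hb_odd, ih m le_rfl]
    constructor
    · rintro ⟨j, h⟩
      exact ⟨j+1, by rw [pow_succ]; omega⟩
    · rintro ⟨j, h⟩
      rcases j with _ | j
      · simp at h
      · exact ⟨j, by rw [pow_succ] at h; omega⟩
  | h2 m ih =>
    rw [hb_even]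
    have := hb_pos m
    have := hb_pos (m+1)
    constructor
    · intro h; omega
    · rintro ⟨j, h⟩
      rcases j with _ | j
      · simp at h
      · rw [pow_succ] at h; omega

lemma ar_ge (n : ℕ) : hb n ≤ ar n + 1 := by
  induction n using nat_cases with
  | h0 => rw [hb_zero]; omega
  | h1 m ih => rw [hb_odd, ar_odd]; exact ih m le_rfl
  | h2 m ih =>
    rw [hb_even, ar_even]
    have := ih m (by omega)
    have := ih (m+1) (by omega)
    have := hb_pos (m/2)
    omega

lemma tree_even (m : ℕ) : hb (2*m+2) = ar (2*m+2) + 1 ↔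
    (hb m = ar m + 1 ∧ hb (m+1) = ar (m+1) + 1 ∧ hb (m/2) = 1) := by
  rw [hb_even, ar_even]
  have := ar_ge m
  have := ar_ge (m+1)
  have := hb_pos (m/2)
  omega

lemma tree_iff (n : ℕ) : hb n = ar n + 1 ↔
    ∃ s t : ℕ, n + 1 = 2 ^ s * (2 ^ (t+1) + 1) ∨ n + 1 = 2 ^ s * (2 ^ (t+1) - 1) := by
  induction n using nat_cases with
  | h0 =>
    rw [hb_zero, ar_zero]
    exact ⟨fun _ => ⟨0, 0, by simp⟩, fun _ => rfl⟩
  | h1 m ih =>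
    rw [hb_odd, ar_odd, ih m le_rfl]
    constructor
    · rintro ⟨s, t, h⟩
      refine ⟨s+1, t, ?_⟩
      rw [pow_succ, mul_comm (2^s), mul_assoc, mul_assoc]
      omega
    · rintro ⟨s, t, h⟩
      rcases s with _ | s
      · have := Nat.one_le_two_pow (n := t)
        rw [pow_succ] at h
        omega
      · refine ⟨s, t, ?_⟩
        rw [pow_succ 2 s, mul_comm (2^s), mul_assoc, mul_assoc] at h
        omega
  | h2 m ih =>
    rw [tree_even, ih m (by omega), ih (m+1) le_rfl, hb_one]
    constructor
    · rintro ⟨_, _, j, hj⟩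
      refine ⟨0, j+1, ?_⟩
      rw [pow_succ, pow_succ]
      omega
    · rintro ⟨s, t, h⟩
      have hs : s = 0 := by
        rcases s with _ | s
        · rfl
        · rw [pow_succ 2 s, mul_comm (2^s), mul_assoc, mul_assoc] at h
          omega
      subst hs
      rcases t with _ | t
      · obtain rfl : m = 0 := by omega
        exact ⟨⟨0, 0, by simp⟩, ⟨1, 0, by simp⟩, 0, by simp⟩
      · have h2 : m + 1 = 2 ^ (t+1) ∨ m + 2 = 2 ^ (t+1) := by
          rw [pow_succ 2 (t+1)] at h
          omega
        refine ⟨?_, ?_, t, ?_⟩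
        · rcases h2 with h2 | h2
          · exact ⟨t+1, 0, Or.inr (by simpa using h2)⟩
          · exact ⟨0, t, Or.inr (by omega)⟩
        · rcases h2 with h2 | h2
          · exact ⟨0, t, Or.inl (by omega)⟩
          · exact ⟨t+1, 0, Or.inr (by simpa using h2)⟩
        · rw [pow_succ] at h2
          omega

theorem stmt19 (n : ℕ) (hn : 0 < n) :
    Set.ncard {p : List ℕ × List ℕ |
        IsHyp n p.1 ∧ IsHyp n p.2 ∧ Step p.1 p.2} = hb n - 1 ↔
      ∃ s t : ℕ, n = 2 ^ (s + t + 1) + 2 ^ s - 1 ∨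
        n = 2 ^ (s + t + 1) - 2 ^ s - 1 := by
  change ar n = hb n - 1 ↔ _
  have h1 : ar n = hb n - 1 ↔ hb n = ar n + 1 := by
    have := hb_pos n
    omega
  rw [h1, tree_iff]
  refine exists_congr fun s => exists_congr fun t => ?_
  have e : 2 ^ (s + t + 1) = 2 ^ s * 2 ^ (t+1) := by rw [← pow_add]; ring_nf
  have hp := Nat.one_le_two_pow (n := s)
  rw [e, mul_add, Nat.mul_sub, mul_one]
  omega
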